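/- Let V be a finite set with N := |V| divisible by 4, and let b, c : ZMod 4 → ZMod 2 satisfy b(0) = 1, c(0) = 1, b(2) + c(2) = 0, and b(1) + c(1) + b(3) + c(3) = 0. Then the relation T_c on A_b is symmetric, irreflexive, and saturated: for every M maximal (with respect to inclusion) in 𝒫_{T_c}(A_b) and every B ⊆ M one has B^{T_c} = ((M ∖ B)^{T_c})^{T_c}. -/

import Mathlib

open scoped symmDiff

/-- `T_S(U) := U` if `|U ∩ S|` is even, and `T_S(U) := V ∖ (U Δ S)` if `|U ∩ S|` is odd. -/
def TSmap {V : Type*} [Fintype V] [DecidableEq V] (S U : Finset V) : Finset V :=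
  if Even (U ∩ S).card then U else (U ∆ S)ᶜ

/-- `L_b(U) := {φ : V → ZMod 2 | ∑_{z ∈ U} φ z = b(|U| mod 4)}`. -/
def Lb {V : Type*} [DecidableEq V] (b : ZMod 4 → ZMod 2) (U : Finset V) :
    Set (V → ZMod 2) :=
  {φ | ∑ z ∈ U, φ z = b (U.card : ZMod 4)}

/-- `A_b`: the disjoint union over `U ⊆ V` of the sets `L_b(U)`,
realized as the set of pairs `(U, φ)` with `φ ∈ L_b(U)`. -/
def AbGround (V : Type*) [DecidableEq V] (b : ZMod 4 → ZMod 2) : Type _ :=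
  {p : Finset V × (V → ZMod 2) // p.2 ∈ Lb b p.1}

/-- The relation `T_c` on pairs `(U, φ)`: for equal first components it is `φ ≠ φ'`,
and for `U ≠ U₁` it is `∑_{z ∈ U Δ U₁} (φ z + φ₁ z) ≠ c(|U Δ U₁| mod 4)`. -/
def TcP {V : Type*} [DecidableEq V] (c : ZMod 4 → ZMod 2)
    (p q : Finset V × (V → ZMod 2)) : Prop :=
  if p.1 = q.1 then p.2 ≠ q.2
  else ∑ z ∈ p.1 ∆ q.1, (p.2 z + q.2 z) ≠ c (((p.1 ∆ q.1).card : ZMod 4))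

/-- The relation `T_c` on `A_b`. -/
def Tc {V : Type*} [DecidableEq V] (b : ZMod 4 → ZMod 2) (c : ZMod 4 → ZMod 2)
    (l l₁ : AbGround V b) : Prop :=
  TcP c l.1 l₁.1


/-- For `B ⊆ A`, `B^T := {l ∈ A | ∀ l₁ ∈ B, (l₁, l) ∈ T}`. -/
def polar {α : Type*} (T : α → α → Prop) (B : Set α) : Set α :=
  {l | ∀ l₁ ∈ B, T l₁ l}

/-- `𝒫_T(A)`: subsets whose distinct elements are pairwise related by `T`. -/
def PTset {α : Type*} (T : α → α → Prop) : Set (Set α) :=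
  {U | ∀ l ∈ U, ∀ l₁ ∈ U, l₁ ≠ l → T l l₁}

/-- `𝒫^T(A)`: the image of `𝒫_T(A)` under `B ↦ B^T`. -/
def PTup {α : Type*} (T : α → α → Prop) : Set (Set α) :=
  polar T '' PTset T

/-- `T` is symmetric: for all `l ≠ l₁`, `(l, l₁) ∈ T ↔ (l₁, l) ∈ T`. -/
def SymmRel {α : Type*} (T : α → α → Prop) : Prop :=
  ∀ l l₁, l ≠ l₁ → (T l l₁ ↔ T l₁ l)

/-- `T` is irreflexive. -/
def IrreflRel {α : Type*} (T : α → α → Prop) : Prop :=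
  ∀ l, ¬ T l l

/-- `M` is a maximal element of `𝒫_T(A)` with respect to inclusion. -/
def MaxPT {α : Type*} (T : α → α → Prop) (M : Set α) : Prop :=
  M ∈ PTset T ∧ ∀ M' ∈ PTset T, M ⊆ M' → M' = M

/-- `T` is saturated: for every maximal `M ∈ 𝒫_T(A)` and every `B ⊆ M`,
`B^T = ((M \ B)^T)^T`. -/
def SaturatedRel {α : Type*} (T : α → α → Prop) : Prop :=
  ∀ M, MaxPT T M → ∀ B ⊆ M, polar T B = polar T (polar T (M \ B))

/-!
Let `E = V →₀ 𝔽₂`. For suitable shifts `s U : V → 𝔽₂`, the map `(U, φ) ↦ (φ + s U, 1_U)` identifies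
`A_b` with the nonsingular vectors of the hyperbolic quadratic form `𝓠 (f, u) = f u` on
`Dual E × E`, and `T_c` with orthogonality of distinct vectors.

For saturation it is enough that any two unrelated `l`, `m` have a common non-neighbour in every
maximal set `M`. Maximality makes `M` closed under sums of three elements, so `M` is a translate of
a totally singular subspace `W`. If a nonsingular `v` paired to `1` with all of `M`, then `W` would
contain every singular vector orthogonal to it, while `v` would be orthogonal to `W`; for a
hyperbolic form this forces `𝓠 v = 0`. Hence every nonsingular vector is orthogonal to some element
of `M`, and applying this to `l + m` yields the common non-neighbour.
-/

section Transfer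

variable {α β : Type*} {T : α → α → Prop} {S : β → β → Prop}

lemma polar_preimage (e : T ≃r S) (B : Set β) : polar T (e ⁻¹' B) = e ⁻¹' polar S B := by
  ext l
  refine ⟨fun hl m hm ↦ ?_, fun hl m hm ↦ e.map_rel_iff.1 (hl _ hm)⟩
  obtain ⟨m, rfl⟩ := e.surjective m
  exact e.map_rel_iff.2 (hl m hm)

lemma preimage_mem_PTset (e : T ≃r S) {U : Set β} (hU : U ∈ PTset S) : e ⁻¹' U ∈ PTset T :=
  fun _ hl _ hm hne ↦ e.map_rel_iff.1 (hU _ hl _ hm (e.injective.ne hne))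

lemma MaxPT.preimage (e : T ≃r S) {M : Set β} (hM : MaxPT S M) : MaxPT T (e ⁻¹' M) := by
  refine ⟨preimage_mem_PTset e hM.1, fun N hN hMN ↦ ?_⟩
  have hmax : e.symm ⁻¹' N = M :=
    hM.2 _ (preimage_mem_PTset e.symm hN) fun x hx ↦ hMN (by simpa using hx)
  rw [← hmax]
  ext l
  simp

lemma SaturatedRel.of_relIso (e : T ≃r S) (hS : SaturatedRel S) : SaturatedRel T := by
  intro M hM B hB
  have polar_eq (C : Set α) : polar T C = e ⁻¹' polar S (e.symm ⁻¹' C) := by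
    rw [← polar_preimage, ← Set.preimage_comp, RelIso.symm_comp_self, Set.preimage_id]
  rw [polar_eq B, polar_eq (M \ B), polar_preimage e, Set.preimage_sdiff]
  exact congrArg _ (hS _ (hM.preimage e.symm) _ (Set.preimage_mono hB))

lemma saturatedRel_of_exists_not_rel
    (h : ∀ M, MaxPT T M → ∀ l m, ¬ T l m → ∃ e ∈ M, ¬ T e l ∧ ¬ T e m) : SaturatedRel T := by
  refine fun M hM B hB ↦ Set.Subset.antisymm (fun m hm l hl ↦ ?_) (fun l hl e he ↦ ?_)
  · by_contra hlm
    obtain ⟨e, he, hel, hem⟩ := h M hM l m hlm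
    exact hel (hl e ⟨he, fun heB ↦ hem (hm e heB)⟩)
  · refine hl e fun d hd ↦ hM.1 d hd.1 e (hB he) ?_
    rintro rfl
    exact hd.2 he

end Transfer

section Orthogonality

open QuadraticMap (polar_comm polar_self polar_add_left polar_add_right)

variable {X : Type*} [AddCommGroup X] [Module (ZMod 2) X]

/-- Orthogonality of distinct nonsingular vectors of a quadratic form over `𝔽₂`. -/
def NonsingularOrtho (Q : QuadraticForm (ZMod 2) X) (x y : {x : X // Q x = 1}) : Prop :=
  x ≠ y ∧ QuadraticMap.polar Q x y = 0

lemma symmRel_nonsingularOrtho (Q : QuadraticForm (ZMod 2) X) : SymmRel (NonsingularOrtho Q) :=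
  fun x y _ ↦ and_congr ne_comm (by rw [polar_comm])

lemma irreflRel_nonsingularOrtho (Q : QuadraticForm (ZMod 2) X) :
    IrreflRel (NonsingularOrtho Q) :=
  fun _ h ↦ h.1 rfl

/-- `M` is a maximal set of pairwise orthogonal nonsingular vectors. Pairs `x = y` need not be
excluded from `polar_eq_zero`, since the polar form is alternating in characteristic two. -/
structure IsMaxOrthoSet (Q : QuadraticForm (ZMod 2) X) (M : Set X) : Prop where
  map_eq_one : ∀ x ∈ M, Q x = 1
  polar_eq_zero : ∀ x ∈ M, ∀ y ∈ M, QuadraticMap.polar Q x y = 0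
  mem_of_polar_eq_zero : ∀ y, Q y = 1 → (∀ x ∈ M, QuadraticMap.polar Q x y = 0) → y ∈ M

lemma polar_self_eq_zero (Q : QuadraticForm (ZMod 2) X) (x : X) :
    QuadraticMap.polar Q x x = 0 := by
  rw [polar_self, two_nsmul, CharTwo.add_self_eq_zero]

lemma MaxPT.isMaxOrthoSet {Q : QuadraticForm (ZMod 2) X} {M : Set {x : X // Q x = 1}}
    (hM : MaxPT (NonsingularOrtho Q) M) : IsMaxOrthoSet Q (Subtype.val '' M) where
  map_eq_one := by
    rintro _ ⟨x, -, rfl⟩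
    exact x.2
  polar_eq_zero := by
    rintro _ ⟨x, hx, rfl⟩ _ ⟨y, hy, rfl⟩
    by_cases hxy : y = x
    · rw [hxy, polar_self_eq_zero]
    · exact (hM.1 x hx y hy hxy).2
  mem_of_polar_eq_zero := by
    intro y hy h
    have hins : insert ⟨y, hy⟩ M ∈ PTset (NonsingularOrtho Q) := by
      rintro p (rfl | hp) q (rfl | hq) hne
      · exact absurd rfl hne
      · exact ⟨hne.symm, by rw [polar_comm]; exact h _ ⟨q, hq, rfl⟩⟩
      · exact ⟨hne.symm, h _ ⟨p, hp, rfl⟩⟩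
      · exact hM.1 p hp q hq hne
    exact ⟨⟨y, hy⟩, hM.2 _ hins (Set.subset_insert _ _) ▸ Set.mem_insert _ _, rfl⟩

namespace IsMaxOrthoSet

variable {Q : QuadraticForm (ZMod 2) X} {M : Set X} {e v x y z : X}

lemma add_add_mem (hM : IsMaxOrthoSet Q M) (hx : x ∈ M) (hy : y ∈ M) (hz : z ∈ M) :
    x + y + z ∈ M := by
  refine hM.mem_of_polar_eq_zero _ ?_ fun a ha ↦ ?_
  · simp only [QuadraticMap.map_add Q, polar_add_left, hM.map_eq_one _ hx, hM.map_eq_one _ hy,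
      hM.map_eq_one _ hz, hM.polar_eq_zero _ hx _ hy, hM.polar_eq_zero _ hx _ hz,
      hM.polar_eq_zero _ hy _ hz]
    decide
  · simp only [polar_add_right, hM.polar_eq_zero _ ha _ hx, hM.polar_eq_zero _ ha _ hy,
      hM.polar_eq_zero _ ha _ hz, add_zero]

/-- The translate `M - e`; it is a subspace because `M` is closed under sums of three elements. -/
def direction (hM : IsMaxOrthoSet Q M) (he : e ∈ M) : Submodule (ZMod 2) X :=
  AddSubgroup.toZModSubmodule 2
    { carrier := {w | e + w ∈ M}
      zero_mem' := by simpa using he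
      add_mem' := fun {u w} hu hw ↦ by
        have hsum : e + (e + u) + (e + w) = e + (u + w) := by
          rw [← add_assoc e e u, ZModModule.add_self, zero_add, add_left_comm]
        exact show e + (u + w) ∈ M from hsum ▸ hM.add_add_mem he hu hw
      neg_mem' := fun {w} hw ↦ by rwa [ZModModule.neg_eq_self w] }

lemma mem_direction (hM : IsMaxOrthoSet Q M) (he : e ∈ M) {w : X} :
    w ∈ hM.direction he ↔ e + w ∈ M :=
  Iff.rfl

lemma map_direction_eq_zero (hM : IsMaxOrthoSet Q M) (he : e ∈ M) {w : X}
    (hw : w ∈ hM.direction he) : Q w = 0 := by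
  have hQ := hM.map_eq_one _ hw
  have hB := hM.polar_eq_zero _ he _ hw
  rw [polar_add_right, polar_self_eq_zero, zero_add] at hB
  rwa [QuadraticMap.map_add Q, hM.map_eq_one _ he, hB, add_zero, add_eq_left] at hQ

lemma polar_direction_eq_zero (hM : IsMaxOrthoSet Q M) (he : e ∈ M)
    (hv : ∀ a ∈ M, QuadraticMap.polar Q a v = 1) {w : X} (hw : w ∈ hM.direction he) :
    QuadraticMap.polar Q w v = 0 := by
  have h := hv _ hw
  rwa [polar_add_left, hv e he, add_eq_left] at h

lemma mem_or_mem_direction (hM : IsMaxOrthoSet Q M) (he : e ∈ M)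
    (hy : ∀ a ∈ M, QuadraticMap.polar Q a y = 0) : y ∈ M ∨ y ∈ hM.direction he := by
  by_cases hQ : Q y = 0
  · refine .inr (hM.mem_of_polar_eq_zero _ ?_ fun a ha ↦ ?_)
    · rw [QuadraticMap.map_add Q, hM.map_eq_one e he, hQ, hy e he, add_zero, add_zero]
    · rw [polar_add_right, hM.polar_eq_zero a ha e he, hy a ha, add_zero]
  · exact .inl (hM.mem_of_polar_eq_zero _ (Fin.eq_one_of_ne_zero _ hQ) hy)

lemma mem_direction_of_singular (hM : IsMaxOrthoSet Q M) (he : e ∈ M) (hQv : Q v = 1)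
    (hv : ∀ a ∈ M, QuadraticMap.polar Q a v = 1) (hx : Q x = 0)
    (hxW : ∀ w ∈ hM.direction he, QuadraticMap.polar Q w x = 0) : x ∈ hM.direction he := by
  have hconst : ∀ a ∈ M, QuadraticMap.polar Q a x = QuadraticMap.polar Q e x := by
    intro a ha
    have hmem : e + a ∈ hM.direction he := by
      rwa [mem_direction, ← add_assoc, ZModModule.add_self, zero_add]
    have h := hxW _ hmem
    rw [polar_add_left] at h
    exact (CharTwo.add_eq_zero.1 h).symm
  by_cases hex : QuadraticMap.polar Q e x = 0
  · refine (hM.mem_or_mem_direction he fun a ha ↦ (hconst a ha).trans hex).resolve_left ?_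
    intro hxM
    exact zero_ne_one (hx.symm.trans (hM.map_eq_one x hxM))
  · have hvx : ∀ a ∈ M, QuadraticMap.polar Q a (v + x) = 0 := by
      intro a ha
      rw [polar_add_right, hv a ha, hconst a ha, Fin.eq_one_of_ne_zero _ hex]
      decide
    have hQvx : Q (v + x) = 1 + QuadraticMap.polar Q (v + x) v := by
      rw [QuadraticMap.map_add Q, hQv, hx, polar_add_left, polar_self_eq_zero, polar_comm Q x]
      ring
    exfalso
    rcases hM.mem_or_mem_direction he hvx with hmem | hmem
    · rw [hM.map_eq_one _ hmem, hv _ hmem] at hQvx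
      exact absurd hQvx (by decide)
    · rw [hM.map_direction_eq_zero he hmem, hM.polar_direction_eq_zero he hv hmem] at hQvx
      exact absurd hQvx (by decide)

lemma exists_polar_eq_one (hM : IsMaxOrthoSet Q M) (hy : Q y = 1) (hyM : y ∉ M) :
    ∃ a ∈ M, QuadraticMap.polar Q a y = 1 := by
  by_contra! h
  refine hyM (hM.mem_of_polar_eq_zero y hy fun a ha ↦ ?_)
  by_contra hne
  exact h a ha (Fin.eq_one_of_ne_zero _ hne)

end IsMaxOrthoSet

end Orthogonality

section Hyperbolic

lemma polar_dualProd {R E : Type*} [CommRing R] [AddCommGroup E] [Module R E]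
    (p q : Module.Dual R E × E) :
    QuadraticMap.polar (QuadraticForm.dualProd R E) p q = p.1 q.2 + q.1 p.2 := by
  simp only [QuadraticMap.polar, QuadraticForm.dualProd_apply, Prod.fst_add, Prod.snd_add,
    LinearMap.add_apply, map_add]
  ring

lemma dualProd_eq_zero_of_orthogonal {K E : Type*} [Field K] [AddCommGroup E] [Module K E]
    {W : Submodule K (Module.Dual K E × E)} (hW : ∀ w ∈ W, QuadraticForm.dualProd K E w = 0)
    (hmax : ∀ x, QuadraticForm.dualProd K E x = 0 →
      (∀ w ∈ W, QuadraticMap.polar (QuadraticForm.dualProd K E) w x = 0) → x ∈ W)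
    {v : Module.Dual K E × E}
    (hv : ∀ w ∈ W, QuadraticMap.polar (QuadraticForm.dualProd K E) w v = 0) :
    QuadraticForm.dualProd K E v = 0 := by
  have hv₂ : v.2 ∈ W.map (LinearMap.snd K (Module.Dual K E) E) := by
    rw [← Subspace.forall_mem_dualAnnihilator_apply_eq_zero_iff]
    intro φ hφ
    rw [Submodule.mem_dualAnnihilator] at hφ
    have hmem : (φ, (0 : E)) ∈ W := by
      refine hmax _ (by simp) fun w hw ↦ ?_
      simpa [polar_dualProd] using hφ w.2 ⟨w, hw, rfl⟩
    simpa [polar_dualProd] using hv _ hmem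
  obtain ⟨w, hw, hwv : w.2 = v.2⟩ := hv₂
  have hQw := hW w hw
  have hBw := hv w hw
  rw [QuadraticForm.dualProd_apply, hwv] at hQw
  rwa [polar_dualProd, hwv, hQw, zero_add] at hBw

open QuadraticMap (polar_comm polar_add_left polar_add_right)

variable {E : Type*} [AddCommGroup E] [Module (ZMod 2) E] {M : Set (Module.Dual (ZMod 2) E × E)}
  {l m v : Module.Dual (ZMod 2) E × E}

local notation "𝓠" => QuadraticForm.dualProd (ZMod 2) E

lemma IsMaxOrthoSet.exists_polar_eq_zero (hM : IsMaxOrthoSet 𝓠 M) (hv : 𝓠 v = 1) :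
    ∃ a ∈ M, QuadraticMap.polar 𝓠 a v = 0 := by
  by_contra! h
  replace h : ∀ a ∈ M, QuadraticMap.polar 𝓠 a v = 1 :=
    fun a ha ↦ Fin.eq_one_of_ne_zero _ (h a ha)
  obtain ⟨e, he⟩ : M.Nonempty := by
    by_contra! hempty
    subst hempty
    exact hM.mem_of_polar_eq_zero v hv (by simp)
  have hv₀ : 𝓠 v = 0 := dualProd_eq_zero_of_orthogonal
    (fun _ hw ↦ hM.map_direction_eq_zero he hw)
    (fun _ hx hxW ↦ hM.mem_direction_of_singular he hv h hx hxW)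
    (fun _ hw ↦ hM.polar_direction_eq_zero he h hw)
  exact zero_ne_one (hv₀.symm.trans hv)

-- If no such `a` existed, the sum of a vector meeting only `l`, one meeting only `m` and one
-- meeting neither would meet both; so `a ↦ polar a (l + m)` would be constantly `1` on `M`.
lemma IsMaxOrthoSet.exists_polar_eq_one_and (hM : IsMaxOrthoSet 𝓠 M) (hl : 𝓠 l = 1)
    (hm : 𝓠 m = 1) (hlm : QuadraticMap.polar 𝓠 l m = 1) (hlM : l ∉ M) (hmM : m ∉ M) :
    ∃ a ∈ M, QuadraticMap.polar 𝓠 a l = 1 ∧ QuadraticMap.polar 𝓠 a m = 1 := by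
  by_contra! hnot
  obtain ⟨a, ha, hal⟩ := hM.exists_polar_eq_one hl hlM
  obtain ⟨b, hb, hbm⟩ := hM.exists_polar_eq_one hm hmM
  have hQ : 𝓠 (l + m) = 1 := by
    rw [QuadraticMap.map_add 𝓠, hl, hm, hlm]
    decide
  obtain ⟨c, hc, hclm⟩ := hM.exists_polar_eq_zero hQ
  rw [polar_add_right] at hclm
  have eq_zero : ∀ t : ZMod 2, t ≠ 1 → t = 0 := by decide
  have ham : QuadraticMap.polar 𝓠 a m = 0 := eq_zero _ (hnot a ha hal)
  have hbl : QuadraticMap.polar 𝓠 b l = 0 := eq_zero _ fun h ↦ hnot b hb h hbm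
  have hcl : QuadraticMap.polar 𝓠 c l = 0 :=
    eq_zero _ fun h ↦ hnot c hc h ((CharTwo.add_eq_zero.1 hclm).symm.trans h)
  rw [hcl, zero_add] at hclm
  refine hnot _ (hM.add_add_mem ha hb hc) ?_ ?_
  · rw [polar_add_left, polar_add_left, hal, hbl, hcl, add_zero, add_zero]
  · rw [polar_add_left, polar_add_left, ham, hbm, hclm, zero_add, add_zero]

lemma saturatedRel_nonsingularOrtho_dualProd : SaturatedRel (NonsingularOrtho 𝓠) := by
  refine saturatedRel_of_exists_not_rel fun M hM l m hlm ↦ ?_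
  have hM' := hM.isMaxOrthoSet
  by_cases hl : l ∈ M
  · exact ⟨l, hl, irreflRel_nonsingularOrtho 𝓠 l, hlm⟩
  by_cases hm : m ∈ M
  · have hml : ¬ NonsingularOrtho 𝓠 m l := by
      rwa [symmRel_nonsingularOrtho 𝓠 m l (by rintro rfl; exact hl hm)]
    exact ⟨m, hm, hml, irreflRel_nonsingularOrtho 𝓠 m⟩
  have not_rel (a y : {x // 𝓠 x = 1}) (h : QuadraticMap.polar 𝓠 a.1 y.1 = 1) :
      ¬ NonsingularOrtho 𝓠 a y := fun hay ↦ zero_ne_one (hay.2.symm.trans h)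
  by_cases heq : l = m
  · obtain ⟨_, ⟨a, ha, rfl⟩, hal⟩ :=
      hM'.exists_polar_eq_one l.2 (Subtype.val_injective.mem_set_image.not.2 hl)
    exact ⟨a, ha, not_rel a l hal, heq ▸ not_rel a l hal⟩
  · have hpolar : QuadraticMap.polar 𝓠 l.1 m.1 = 1 :=
      Fin.eq_one_of_ne_zero _ fun h ↦ hlm ⟨heq, h⟩
    obtain ⟨_, ⟨a, ha, rfl⟩, hal, ham⟩ :=
      hM'.exists_polar_eq_one_and l.2 m.2 hpolar (Subtype.val_injective.mem_set_image.not.2 hl)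
        (Subtype.val_injective.mem_set_image.not.2 hm)
    exact ⟨a, ha, not_rel a l hal, not_rel a m ham⟩

end Hyperbolic

section Counting

variable {V : Type*}

lemma sum_symmDiff_zmod_two {A : Type*} [DecidableEq V] [AddCommGroup A] [Module (ZMod 2) A]
    (U W : Finset V) (f : V → A) : ∑ z ∈ U ∆ W, f z = ∑ z ∈ U, f z + ∑ z ∈ W, f z := by
  have hUW : U ∆ W = (U \ W) ∪ (W \ U) := rfl
  rw [hUW, Finset.sum_union disjoint_sdiff_sdiff, ← Finset.sum_inter_add_sum_sdiff U W f,
    ← Finset.sum_inter_add_sum_sdiff W U f, Finset.inter_comm W U, add_add_add_comm,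
    ZModModule.add_self, zero_add]

lemma card_symmDiff_add_two_mul_card_inter [DecidableEq V] (U W : Finset V) :
    (U ∆ W).card + 2 * (U ∩ W).card = U.card + W.card := by
  have hUW : U ∆ W = (U \ W) ∪ (W \ U) := rfl
  have hcard := Finset.card_union_of_disjoint (disjoint_sdiff_sdiff (x := U) (y := W))
  have hU := Finset.card_sdiff_add_card_inter U W
  have hW := Finset.card_sdiff_add_card_inter W U
  rw [Finset.inter_comm] at hW
  rw [hUW]
  lia

lemma sum_sum_rel_add_sum_sum_rel [DecidableEq V] (r : V → V → Prop) [Std.Trichotomous r]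
    [Std.Asymm r] [DecidableRel r] (U W : Finset V) :
    ∑ z ∈ U, ∑ i ∈ W, (if r i z then 1 else 0) + ∑ z ∈ W, ∑ i ∈ U, (if r i z then 1 else 0) +
      (U ∩ W).card = U.card * W.card := by
  have htri (i z : V) :
      ((if r i z then 1 else 0) + (if r z i then 1 else 0) + if z = i then 1 else 0) = 1 := by
    rcases trichotomous_of r i z with h | rfl | h
    · simp [h, asymm_of r h, (ne_of_irrefl h).symm]
    · simp [irrefl_of r i]
    · simp [h, asymm_of r h, ne_of_irrefl h]
  have hinter : (U ∩ W).card = ∑ z ∈ U, ∑ i ∈ W, if z = i then 1 else 0 := by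
    simp [Finset.sum_ite_eq, Finset.sum_ite_mem]
  rw [hinter, Finset.sum_comm (s := W), ← Finset.sum_add_distrib, ← Finset.sum_add_distrib]
  simp only [← Finset.sum_add_distrib, htri]
  simp

lemma sum_sum_rel_self (r : V → V → Prop) [Std.Trichotomous r] [Std.Asymm r]
    [DecidableRel r] (U : Finset V) :
    ∑ z ∈ U, ∑ i ∈ U, (if r i z then 1 else 0) = U.card.choose 2 := by
  classical
  have h := sum_sum_rel_add_sum_sum_rel r U U
  rw [Finset.inter_self] at h
  rw [Nat.choose_two_right, Nat.mul_sub_one]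
  lia

end Counting

section Twist

/-- Reduction `ZMod 4 → ZMod 2` modulo two. -/
def parity : ZMod 4 →+* ZMod 2 := ZMod.castHom (by decide) (ZMod 2)

/-- The binomial coefficient `n.choose 2` modulo two, which depends on `n` modulo four only. -/
def chooseTwo (n : ZMod 4) : ZMod 2 := n.val.choose 2

lemma chooseTwo_natCast (n : ℕ) : chooseTwo n = n.choose 2 := by
  have succ : ∀ m : ZMod 4, chooseTwo (m + 1) = parity m + chooseTwo m := by decide
  induction n with
  | zero => rfl
  | succ n ih =>
    rw [Nat.cast_succ, succ, ih, map_natCast, Nat.choose_succ_succ' n 1, Nat.choose_one_right,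
      Nat.cast_add]

lemma chooseTwo_add_sub_two_mul :
    ∀ n m k : ZMod 4, chooseTwo (n + m - 2 * k) =
      chooseTwo n + chooseTwo m + parity n * parity m + parity k := by
  decide

variable {V : Type*} [DecidableEq V]

lemma chooseTwo_card_symmDiff (U W : Finset V) :
    chooseTwo (U ∆ W).card =
      chooseTwo U.card + chooseTwo W.card + U.card * W.card + (U ∩ W).card := by
  have hcard : ((U ∆ W).card : ZMod 4) = U.card + W.card - 2 * (U ∩ W).card :=
    eq_sub_of_add_eq <| by
      exact_mod_cast congrArg (Nat.cast : ℕ → ZMod 4) (card_symmDiff_add_two_mul_card_inter U W)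
  rw [hcard, chooseTwo_add_sub_two_mul, map_natCast, map_natCast, map_natCast]

lemma cast_card_symmDiff (U W : Finset V) :
    ((U ∆ W).card : ZMod 2) = U.card + W.card := by
  simpa using sum_symmDiff_zmod_two U W fun _ ↦ (1 : ZMod 2)

/-- `s U` is the amount by which `φ` has to be shifted in a pair `(U, φ)` so that the conditions
defining `L_b` and `T_c`, where `b = g + 1` and `c = h + 1`, become linear algebra over `𝔽₂`. -/
structure IsTwist (g h : ZMod 4 → ZMod 2) (s : Finset V → V → ZMod 2) : Prop where
  sum_self : ∀ U, ∑ z ∈ U, s U z = g U.card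
  sum_add_sum : ∀ U W,
    ∑ z ∈ U, s W z + ∑ z ∈ W, s U z = g U.card + g W.card + h (U ∆ W).card

variable (V) in
/-- The pairs `(g, h)` which admit a twist. Twists add up, so they form a subspace. -/
def twistable : Submodule (ZMod 2) ((ZMod 4 → ZMod 2) × (ZMod 4 → ZMod 2)) where
  carrier := {p | ∃ s : Finset V → V → ZMod 2, IsTwist p.1 p.2 s}
  zero_mem' := ⟨0, by simp, by simp⟩
  add_mem' := by
    rintro p q ⟨s, hs⟩ ⟨t, ht⟩
    refine ⟨s + t, fun U ↦ ?_, fun U W ↦ ?_⟩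
    · simp [Finset.sum_add_distrib, hs.sum_self, ht.sum_self]
    · have hs' := hs.sum_add_sum U W
      have ht' := ht.sum_add_sum U W
      simp only [Pi.add_apply, Finset.sum_add_distrib, Prod.fst_add, Prod.snd_add]
      linear_combination hs' + ht'
  smul_mem' := by
    rintro a p ⟨s, hs⟩
    refine ⟨a • s, fun U ↦ ?_, fun U W ↦ ?_⟩
    · simp [← Finset.mul_sum, hs.sum_self]
    · simp [← Finset.mul_sum, ← mul_add, hs.sum_add_sum]

variable (V)

lemma parity_parity_mem_twistable : (⇑parity, ⇑parity) ∈ twistable V := by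
  refine ⟨fun U z ↦ if z ∈ U then 1 else 0, fun U ↦ ?_, fun U W ↦ ?_⟩
  · simp
  · simp [cast_card_symmDiff, Finset.inter_comm W U, CharTwo.add_self_eq_zero]

lemma zero_parity_mem_twistable : (0, ⇑parity) ∈ twistable V := by
  refine ⟨fun U z ↦ 1 + if z ∈ U then 1 else 0, fun U ↦ ?_, fun U W ↦ ?_⟩
  · simp [Finset.sum_add_distrib, CharTwo.add_self_eq_zero]
  · simp only [Finset.sum_add_distrib, Finset.sum_const, nsmul_eq_mul, mul_one, Finset.sum_ite_mem,
      Finset.inter_comm W U, Pi.zero_apply, add_zero, map_natCast, cast_card_symmDiff]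
    grind

lemma chooseTwo_chooseTwo_mem_twistable : (chooseTwo, chooseTwo) ∈ twistable V := by
  classical
  refine ⟨fun U z ↦ ∑ i ∈ U, if WellOrderingRel i z then 1 else 0, fun U ↦ ?_, fun U W ↦ ?_⟩
  · dsimp only
    rw [chooseTwo_natCast, ← sum_sum_rel_self WellOrderingRel U]
    push_cast
    rfl
  · have h := congrArg (Nat.cast : ℕ → ZMod 2) (sum_sum_rel_add_sum_sum_rel WellOrderingRel U W)
    push_cast at h
    dsimp only
    rw [chooseTwo_card_symmDiff, ← h]
    grind

lemma parity_mul_chooseTwo_mem_twistable :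
    (parity * chooseTwo, parity * chooseTwo) ∈ twistable V := by
  refine ⟨fun U z ↦ chooseTwo U.card + U.card + U.card * if z ∈ U then 1 else 0,
    fun U ↦ ?_, fun U W ↦ ?_⟩
  · simp only [mul_ite, mul_one, mul_zero, Finset.sum_add_distrib, Finset.sum_const,
      nsmul_eq_mul, Finset.sum_ite_mem, Finset.inter_self, Pi.mul_apply, map_natCast]
    grind
  · have hU := ZMod.pow_card (U.card : ZMod 2)
    have hW := ZMod.pow_card (W.card : ZMod 2)
    simp only [mul_ite, mul_one, mul_zero, Finset.sum_add_distrib, Finset.sum_const,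
      nsmul_eq_mul, Finset.sum_ite_mem, Finset.inter_comm W U, Pi.mul_apply, map_natCast,
      cast_card_symmDiff, chooseTwo_card_symmDiff]
    grind

variable {V}

lemma eq_parity_add_chooseTwo_add_mul : ∀ g : ZMod 4 → ZMod 2, g 0 = 0 → ∀ n, g n =
    g 1 * parity n + g 2 * chooseTwo n + (g 1 + g 2 + g 3) * (parity n * chooseTwo n) := by
  decide

lemma mem_twistable {g h : ZMod 4 → ZMod 2} (hg₀ : g 0 = 0) (hh₀ : h 0 = 0) (h₂ : g 2 = h 2)
    (h₁₃ : g 1 + g 3 = h 1 + h 3) : (g, h) ∈ twistable V := by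
  have hdecomp : (g, h) = g 1 • (⇑parity, ⇑parity) + g 2 • (chooseTwo, chooseTwo) +
      (g 1 + g 2 + g 3) • (parity * chooseTwo, parity * chooseTwo) +
      (g 1 + h 1) • (0, ⇑parity) := by
    refine Prod.ext (funext fun n ↦ ?_) (funext fun n ↦ ?_)
    · simpa using eq_parity_add_chooseTwo_add_mul g hg₀ n
    · have hn := eq_parity_add_chooseTwo_add_mul h hh₀ n
      simp only [Prod.smul_mk, Prod.mk_add_mk, Pi.add_apply, Pi.smul_apply, Pi.mul_apply,
        smul_eq_mul]
      grind
  rw [hdecomp]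
  exact add_mem (add_mem (add_mem (Submodule.smul_mem _ _ (parity_parity_mem_twistable V))
    (Submodule.smul_mem _ _ (chooseTwo_chooseTwo_mem_twistable V)))
    (Submodule.smul_mem _ _ (parity_mul_chooseTwo_mem_twistable V)))
    (Submodule.smul_mem _ _ (zero_parity_mem_twistable V))

end Twist

section Model

/-- Finite sets as finitely supported indicator functions with values in `𝔽₂`. -/
noncomputable def finsetEquivFinsupp (V : Type*) : Finset V ≃ (V →₀ ZMod 2) where
  toFun U := Finsupp.indicator U fun _ _ ↦ 1
  invFun := Finsupp.support
  left_inv U := by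
    ext z
    by_cases hz : z ∈ U
    · simp [hz, Finsupp.indicator_of_mem hz]
    · simp [hz, Finsupp.indicator_of_notMem hz]
  right_inv u := by
    ext z
    by_cases hz : u z = 0
    · rw [hz, Finsupp.indicator_of_notMem (by simpa using hz)]
    · rw [Finsupp.indicator_of_mem (by simpa using hz)]
      exact (Fin.eq_one_of_ne_zero _ hz).symm

variable {V : Type*}

/-- The map `(U, φ) ↦ (φ + s U, 1_U)`, where a function on `V` is read as a linear form on
`V →₀ 𝔽₂`. -/
noncomputable def twistEquiv (s : Finset V → V → ZMod 2) :
    Finset V × (V → ZMod 2) ≃ Module.Dual (ZMod 2) (V →₀ ZMod 2) × (V →₀ ZMod 2) :=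
  ((finsetEquivFinsupp V).prodShear fun U ↦
    (Equiv.addRight (s U)).trans (Finsupp.llift (ZMod 2) (ZMod 2) (ZMod 2) V).toEquiv).trans
    (Equiv.prodComm _ _)

lemma twistEquiv_fst_twistEquiv_snd (s : Finset V → V → ZMod 2) (p q : Finset V × (V → ZMod 2)) :
    (twistEquiv s p).1 (twistEquiv s q).2 = ∑ z ∈ q.1, p.2 z + ∑ z ∈ q.1, s p.1 z := by
  have hsum : (twistEquiv s p).1 (twistEquiv s q).2 =
      (Finsupp.indicator q.1 fun _ _ ↦ (1 : ZMod 2)).sum fun z a ↦ a • (p.2 z + s p.1 z) :=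
    rfl
  rw [hsum, Finsupp.sum_indicator_index _ (by simp), ← Finset.sum_add_distrib]
  simp only [one_smul]

variable [DecidableEq V] {b c : ZMod 4 → ZMod 2} {s : Finset V → V → ZMod 2}

lemma tcP_iff (hc : c 0 = 1) (p q : Finset V × (V → ZMod 2)) :
    TcP c p q ↔ p ≠ q ∧ ∑ z ∈ p.1 ∆ q.1, (p.2 z + q.2 z) + c (p.1 ∆ q.1).card + 1 = 0 := by
  rw [TcP]
  split_ifs with hU
  · simp [hU, hc, Prod.ext_iff, CharTwo.add_self_eq_zero]
  · have hne : p ≠ q := fun h ↦ hU (congrArg Prod.fst h)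
    have key : ∀ x y : ZMod 2, x ≠ y ↔ x + y + 1 = 0 := by decide
    rw [key, and_iff_right hne]

lemma IsTwist.dualProd_twistEquiv (hs : IsTwist (b + 1) (c + 1) s)
    (p : Finset V × (V → ZMod 2)) :
    p.2 ∈ Lb b p.1 ↔ QuadraticForm.dualProd (ZMod 2) (V →₀ ZMod 2) (twistEquiv s p) = 1 := by
  rw [QuadraticForm.dualProd_apply, twistEquiv_fst_twistEquiv_snd, hs.sum_self]
  change ∑ z ∈ p.1, p.2 z = b p.1.card ↔ ∑ z ∈ p.1, p.2 z + (b p.1.card + 1) = 1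
  grind

lemma IsTwist.polar_twistEquiv (hs : IsTwist (b + 1) (c + 1) s)
    {p q : Finset V × (V → ZMod 2)} (hp : p.2 ∈ Lb b p.1) (hq : q.2 ∈ Lb b q.1) :
    QuadraticMap.polar (QuadraticForm.dualProd (ZMod 2) (V →₀ ZMod 2))
        (twistEquiv s p) (twistEquiv s q) =
      ∑ z ∈ p.1 ∆ q.1, (p.2 z + q.2 z) + c (p.1 ∆ q.1).card + 1 := by
  have hcross := hs.sum_add_sum p.1 q.1
  rw [polar_dualProd, twistEquiv_fst_twistEquiv_snd, twistEquiv_fst_twistEquiv_snd,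
    sum_symmDiff_zmod_two, Finset.sum_add_distrib, Finset.sum_add_distrib, hp, hq]
  simp only [Pi.add_apply, Pi.one_apply] at hcross
  grind

/-- The map `twistEquiv s` as an isomorphism from `T_c` on `A_b` onto the orthogonality relation on
the nonsingular vectors of the hyperbolic form `(f, u) ↦ f u`. -/
noncomputable def IsTwist.relIso (hs : IsTwist (b + 1) (c + 1) s) (hc : c 0 = 1) :
    Tc (V := V) b c ≃r NonsingularOrtho (QuadraticForm.dualProd (ZMod 2) (V →₀ ZMod 2)) where
  toEquiv := (twistEquiv s).subtypeEquiv hs.dualProd_twistEquiv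
  map_rel_iff' := by
    intro l l₁
    rw [Tc, tcP_iff hc, ← hs.polar_twistEquiv l.2 l₁.2]
    exact and_congr ((Equiv.injective _).ne_iff.trans Subtype.val_injective.ne_iff.symm) Iff.rfl

end Model

theorem stmt14_general {V : Type*} [DecidableEq V] (b c : ZMod 4 → ZMod 2)
    (hb0 : b 0 = 1) (hc0 : c 0 = 1) (hbc2 : b 2 + c 2 = 0)
    (hbc13 : b 1 + c 1 + b 3 + c 3 = 0) :
    SymmRel (Tc (V := V) b c) ∧ IrreflRel (Tc (V := V) b c) ∧
      SaturatedRel (Tc (V := V) b c) := by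
  obtain ⟨s, hs⟩ : (b + 1, c + 1) ∈ twistable V :=
    mem_twistable (by simp [hb0, CharTwo.add_self_eq_zero])
      (by simp [hc0, CharTwo.add_self_eq_zero])
      (by simpa using CharTwo.add_eq_zero.1 hbc2)
      (by simp only [Pi.add_apply, Pi.one_apply]; grind)
  let e : Tc (V := V) b c ≃r _ := IsTwist.relIso hs hc0
  refine ⟨fun l m hne ↦ ?_, fun l h ↦ ?_, saturatedRel_nonsingularOrtho_dualProd.of_relIso e⟩
  · rw [← e.map_rel_iff, ← e.map_rel_iff, symmRel_nonsingularOrtho _ _ _ (e.injective.ne hne)]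
  · exact irreflRel_nonsingularOrtho _ _ (e.map_rel_iff.2 h)

theorem stmt14 {V : Type*} [Fintype V] [DecidableEq V]
    (h4 : 4 ∣ Fintype.card V) (b c : ZMod 4 → ZMod 2)
    (hb0 : b 0 = 1) (hc0 : c 0 = 1) (hbc2 : b 2 + c 2 = 0)
    (hbc13 : b 1 + c 1 + b 3 + c 3 = 0) :
    SymmRel (Tc (V := V) b c) ∧ IrreflRel (Tc (V := V) b c) ∧
      SaturatedRel (Tc (V := V) b c) :=
  stmt14_general b c hb0 hc0 hbc2 hbc13
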